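/- arXiv:math-ph/9905008 — 2 statements merged into one kernel-verified Lean document; each statement's English description precedes it below -/
import Mathlib

section
/- Let w ∈ W_α and let n ≥ 2 be such that |w| < |s_n|. Then w is a subword of s_{n+2}. -/
open scoped Classical

noncomputable section

/-- The Sturmian potential `v_{α,θ}(n) = χ_{[1-α,1)}(nα + θ mod 1)`. -/
def sturmian (α θ : ℝ) (n : ℤ) : ℝ :=
  if Int.fract (n * α + θ) ∈ Set.Ico (1 - α) 1 then 1 else 0

/-- Iterates of the Gauss map, starting at `α`. -/
def cfGauss (α : ℝ) : ℕ → ℝ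
  | 0 => α
  | n + 1 => Int.fract (cfGauss α n)⁻¹

/-- The continued fraction coefficients `a_n` of `α = [a_1, a_2, …]` (for `n ≥ 1`):
`a_1 = ⌊1/α⌋`, `a_2 = ⌊1/fract(1/α)⌋`, … . -/
def cfCoeff (α : ℝ) (n : ℕ) : ℕ := ⌊(cfGauss α (n - 1))⁻¹⌋₊

/-- The standard words, with an index shift: `sWord a n` is `s_{n-1}`.  Thus
`sWord a 0 = s_{-1} = 1`, `sWord a 1 = s_0 = 0`, `sWord a 2 = s_1 = 0^{a_1 - 1} 1`, and
`sWord a (n+1) = s_n = s_{n-1}^{a_n} s_{n-2}` for `n ≥ 2`. -/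
def sWord (a : ℕ → ℕ) : ℕ → List ℝ
  | 0 => [1]
  | 1 => [0]
  | 2 => List.replicate (a 1 - 1) (0 : ℝ) ++ [1]
  | n + 3 => (List.replicate (a (n + 2)) (sWord a (n + 2))).flatten ++ sWord a (n + 1)

/-- The `n`-th letter (for `n ≥ 1`) of the one-sided infinite word `c_α = lim s_n`:
since `|s_n| ≥ n`, it is the `n`-th letter of `s_n`. -/
def cword (α : ℝ) (n : ℕ) : ℝ := (sWord (cfCoeff α) (n + 1)).getD (n - 1) 0

/-- `w` is a (finite) prefix of the one-sided infinite word `c_α`. -/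
def IsPrefC (α : ℝ) (w : List ℝ) : Prop :=
  w = (List.range w.length).map fun i => cword α (i + 1)

/-- The one-step transfer matrix `T(λ,E,a) = [[E - λa, -1], [1, 0]]`. -/
def transferT (lam : ℝ) (E : ℂ) (a : ℝ) : Matrix (Fin 2) (Fin 2) ℂ :=
  !![E - lam * a, -1; 1, 0]

/-- The transfer matrix over a word `w = w_1 … w_n`:
`M(λ,E,w) = T(λ,E,w_n) ⋯ T(λ,E,w_1)`. -/
def transferM (lam : ℝ) (E : ℂ) : List ℝ → Matrix (Fin 2) (Fin 2) ℂ
  | [] => 1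
  | a :: w => transferM lam E w * transferT lam E a

/-- The operator norm on `ℂ²` (with the euclidean norm) of a `2 × 2` complex matrix. -/
def opNorm (A : Matrix (Fin 2) (Fin 2) ℂ) : ℝ :=
  ‖Matrix.toEuclideanCLM (𝕜 := ℂ) A‖

/-- The word `v_{α,θ}^n = v_{α,θ}(1) … v_{α,θ}(n)`. -/
def sturmianWord (α θ : ℝ) (n : ℕ) : List ℝ :=
  (List.range n).map fun k => sturmian α θ (k + 1)

/-- The set of finite nonempty subwords of a two-sided sequence `v : ℤ → ℝ`. -/
def SubZ (v : ℤ → ℝ) : Set (List ℝ) :=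
  {w | w ≠ [] ∧ ∃ k : ℤ, w = (List.range w.length).map fun i => v (k + i)}

/-- The set of finite nonempty subwords of the one-sided word `c_α` (indexed from `1`). -/
def SubC (α : ℝ) : Set (List ℝ) :=
  {w | w ≠ [] ∧ ∃ k : ℕ, 1 ≤ k ∧ w = (List.range w.length).map fun i => cword α (k + i)}

/-- `W_α`, the set of all finite nonempty subwords of the sequences `v_{α,θ}`, `θ ∈ [0,1)`. -/
def Walpha (α : ℝ) : Set (List ℝ) :=
  {w | ∃ θ ∈ Set.Ico (0 : ℝ) 1, w ∈ SubZ (sturmian α θ)}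

/-- `α` is a bounded density number: `limsup_{n→∞} (1/n) ∑_{j=1}^n a_j < ∞` for the
continued fraction coefficients `a_j` of `α`. -/
def BoundedDensity (α : ℝ) : Prop :=
  Filter.IsBoundedUnder (· ≤ ·) Filter.atTop
    (fun n : ℕ => (1 / n : ℝ) * ∑ j ∈ Finset.Icc 1 n, (cfCoeff α j : ℝ))

end

/-!
A Sturmian sequence of slope `α` is the sequence of increments of `F n = ⌊n α + θ⌋`. The upper
adjoint `t` of `F`, which lists the positions of the letter `1`, has slope `α⁻¹`; subtracting
`m ↦ m a₁` from it gives an integer sequence of slope `fract α⁻¹`, whose increments say whether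
consecutive `1`s are `a₁` or `a₁ + 1` apart. So the sequence is the image of a Sturmian sequence
of slope `fract α⁻¹` under `0 ↦ s₁`, `1 ↦ s₁ s₀`, and by iteration a concatenation of blocks `s_n`
and `s_n s_{n-1}`.

A subword shorter than `s_n` meets at most two consecutive blocks, and therefore lies in
`s_n s_n` or `s_n s_{n-1} s_n`. The latter is a suffix of `s_{n+2}`. In the former the last letter
is not needed, and `s_n` without its last letter is a prefix of `s_{n-1} s_n`.
-/

/-- The consecutive terms `f i, f (i + 1), …, f (j - 1)` of a two-sided sequence; empty when
`j ≤ i`. -/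
def factor {β : Type*} (f : ℤ → β) (i j : ℤ) : List β := (Int.range i j).map f

section Factor

variable {β γ : Type*} {f : ℤ → β} {g : ℤ → γ}

lemma factor_eq_nil {i j : ℤ} (hji : j ≤ i) : factor f i j = [] := by
  simp [factor, Int.range, hji]

lemma factor_append {i j k : ℤ} (hij : i ≤ j) (hjk : j ≤ k) :
    factor f i j ++ factor f j k = factor f i k := by
  obtain ⟨p, rfl⟩ := Int.le.dest hij
  obtain ⟨q, rfl⟩ := Int.le.dest hjk
  have hlen : (i + p + q - i).toNat = p + q := by omega
  simp only [factor, Int.range, hlen, List.range_add, List.map_append, List.map_map,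
    add_sub_cancel_left, Int.toNat_natCast]
  simp [Function.comp_def, add_assoc]

lemma factor_self_add_one (i : ℤ) : factor f i (i + 1) = [f i] := by
  simp [factor, Int.range]

lemma factor_eq_replicate {i j : ℤ} {c : β} (h : ∀ n, i ≤ n → n < j → f n = c) :
    factor f i j = List.replicate (j - i).toNat c := by
  refine List.eq_replicate_iff.2 ⟨by simp [factor, Int.range], fun b hb => ?_⟩
  obtain ⟨n, hn, rfl⟩ := List.mem_map.1 hb
  obtain ⟨hin, hnj⟩ := Int.mem_range_iff.1 hn
  exact h n hin hnj

lemma factor_infix_factor {i j k l : ℤ} (hik : i ≤ k) (hlj : l ≤ j) :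
    factor f k l <:+: factor f i j := by
  rcases lt_or_ge l k with hlk | hkl
  · rw [factor_eq_nil hlk.le]
    exact List.nil_infix
  rw [← factor_append hik (hkl.trans hlj), ← factor_append hkl hlj]
  exact List.infix_append' _ _ _

lemma factor_eq_flatMap_factor {φ : γ → List β} {c : ℤ → ℤ} (hc : Monotone c)
    (hφ : ∀ m, factor f (c m) (c (m + 1)) = φ (g m)) (i j : ℤ) :
    factor f (c i) (c j) = (factor g i j).flatMap φ := by
  rcases lt_or_ge j i with hji | hij
  · rw [factor_eq_nil hji.le, factor_eq_nil (hc hji.le), List.flatMap_nil]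
  induction j, hij using Int.leInduction with
  | base => rw [factor_eq_nil le_rfl, factor_eq_nil le_rfl, List.flatMap_nil]
  | succ j hij ih =>
    rw [← factor_append (hc hij) (hc (Int.le_add_one le_rfl)),
      ← factor_append hij (Int.le_add_one le_rfl), List.flatMap_append, ih, hφ,
      factor_self_add_one, List.flatMap_singleton]

end Factor

lemma exists_eq_factor_of_mem_subZ {v : ℤ → ℝ} {w : List ℝ} (hw : w ∈ SubZ v) :
    ∃ k l, w = factor v k l := by
  obtain ⟨-, k, hk⟩ := hw
  refine ⟨k, k + w.length, hk.trans ?_⟩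
  simp [factor, Int.range, Function.comp_def, ← List.map_eq_flatMap]

/-- An integer sequence whose increments over any window differ by less than `1` from those of the
line of slope `α`. Both `⌊n α + θ⌋` and `⌈n α + θ⌉` are examples; working with this property
instead of a formula treats the two alike and dispenses with the intercept. -/
def IsMechanical (α : ℝ) (F : ℤ → ℤ) : Prop :=
  ∀ n m : ℤ, |(F n - F m : ℝ) - (n - m) * α| < 1

/-- The sequence of increments of an integer sequence, read as letters of a word over `ℝ`. -/
def coding (F : ℤ → ℤ) (n : ℤ) : ℝ := (F (n + 1) - F n : ℤ)

lemma isMechanical_floor (α θ : ℝ) : IsMechanical α fun n => ⌊n * α + θ⌋ := by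
  intro n m
  rw [abs_lt]
  constructor <;>
    linarith [Int.floor_le (n * α + θ), Int.lt_floor_add_one (n * α + θ),
      Int.floor_le (m * α + θ), Int.lt_floor_add_one (m * α + θ)]

lemma sturmian_eq_coding_floor {α : ℝ} (h0 : 0 ≤ α) (h1 : α < 1) (θ : ℝ) :
    sturmian α θ = coding fun n => ⌊n * α + θ⌋ := by
  funext n
  set x := n * α + θ with hx
  have hfloor := Int.floor_add_fract x
  have hsucc : ((n + 1 : ℤ) : ℝ) * α + θ = x + α := by push_cast; ring
  have hmem : Int.fract x ∈ Set.Ico (1 - α) 1 ↔ 1 - α ≤ Int.fract x :=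
    and_iff_left (Int.fract_lt_one x)
  simp only [sturmian, coding, hsucc, ← hx, hmem]
  split_ifs with h
  · have : ⌊x + α⌋ = ⌊x⌋ + 1 := by
      rw [Int.floor_eq_iff]
      push_cast
      constructor <;> linarith [Int.fract_lt_one x]
    simp [this]
  · have : ⌊x + α⌋ = ⌊x⌋ := by
      rw [Int.floor_eq_iff]
      constructor <;> linarith [Int.fract_nonneg x]
    simp [this]

section IsMechanical

variable {α : ℝ} {F t : ℤ → ℤ}

lemma IsMechanical.apply_add_one (hF : IsMechanical α F) (h0 : 0 ≤ α) (h1 : α < 1) (n : ℤ) :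
    F (n + 1) = F n ∨ F (n + 1) = F n + 1 := by
  obtain ⟨hlow, hupp⟩ := abs_lt.1 (hF (n + 1) n)
  push_cast at hlow hupp
  have hlow' : F n - 1 < F (n + 1) := by exact_mod_cast (by linarith : (F n - 1 : ℝ) < F (n + 1))
  have hupp' : F (n + 1) < F n + 2 := by exact_mod_cast (by linarith : (F (n + 1) : ℝ) < F n + 2)
  omega

lemma IsMechanical.monotone (hF : IsMechanical α F) (h0 : 0 ≤ α) (h1 : α < 1) : Monotone F :=
  monotone_int_of_le_succ fun n => by have := hF.apply_add_one h0 h1 n; omega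

lemma IsMechanical.sub_mul (hF : IsMechanical α F) (a : ℤ) :
    IsMechanical (α - a) fun n => F n - n * a := by
  intro n m
  convert hF n m using 2
  push_cast
  ring

lemma IsMechanical.exists_galoisConnection (hF : IsMechanical α F) (h0 : 0 < α) (h1 : α < 1) :
    ∃ t, GaloisConnection F t := by
  have exists_last (m : ℤ) : ∃ n, F n ≤ m ∧ ∀ k, F k ≤ m → k ≤ n := by
    refine Int.exists_greatest_of_bdd ⟨⌈(m - F 0 + 1) / α⌉, fun k hk => ?_⟩
      ⟨⌊(m - F 0 - 1) / α⌋, ?_⟩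
    · have hlow := (abs_lt.1 (hF k 0)).1
      have hk' : (F k : ℝ) ≤ m := by exact_mod_cast hk
      have : (k : ℝ) ≤ (m - F 0 + 1) / α := by
        rw [le_div_iff₀ h0]
        push_cast at hlow
        linarith
      exact_mod_cast this.trans (Int.le_ceil _)
    · set n := ⌊(m - F 0 - 1) / α⌋
      have hupp := (abs_lt.1 (hF n 0)).2
      have hn : n * α ≤ m - F 0 - 1 := (le_div_iff₀ h0).1 (Int.floor_le _)
      push_cast at hupp
      exact_mod_cast (by linarith : (F n : ℝ) ≤ m)
  choose t ht ht_max using exists_last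
  exact ⟨t, fun n m => ⟨ht_max m n, fun h => (hF.monotone h0.le h1 h).trans (ht m)⟩⟩

lemma IsMechanical.apply_upperAdjoint (hF : IsMechanical α F) (h0 : 0 ≤ α) (h1 : α < 1)
    (ht : GaloisConnection F t) (m : ℤ) : F (t m) = m ∧ F (t m + 1) = m + 1 := by
  have hle : F (t m) ≤ m := ht.l_u_le m
  have hlt : ¬F (t m + 1) ≤ m := fun h => by have := (ht _ _).1 h; omega
  have := hF.apply_add_one h0 h1 (t m)
  omega

lemma IsMechanical.upperAdjoint (hF : IsMechanical α F) (h0 : 0 < α) (h1 : α < 1)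
    (ht : GaloisConnection F t) : IsMechanical α⁻¹ t := by
  have lower (m k : ℤ) : (m - k : ℝ) * α⁻¹ < t m - t k + 1 := by
    have h := (abs_lt.1 (hF (t m + 1) (t k))).2
    rw [(hF.apply_upperAdjoint h0.le h1 ht m).2, (hF.apply_upperAdjoint h0.le h1 ht k).1] at h
    rw [← div_eq_mul_inv, div_lt_iff₀ h0]
    push_cast at h
    linarith
  intro m k
  rw [abs_lt]
  constructor <;> linarith [lower m k, lower k m]

lemma coding_eq_zero (ht : GaloisConnection F t) {m n : ℤ} (hmn : t m < n)
    (hnm : n + 1 ≤ t (m + 1)) : coding F n = 0 := by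
  have hF {k : ℤ} (hmk : t m < k) (hkm : k ≤ t (m + 1)) : F k = m + 1 := by
    have hle := (ht k (m + 1)).2 hkm
    have hlt := (ht k m).not.2 (not_le.2 hmk)
    omega
  simp [coding, hF hmn (by omega), hF (by omega) hnm]

lemma IsMechanical.coding_upperAdjoint (hF : IsMechanical α F) (h0 : 0 ≤ α) (h1 : α < 1)
    (ht : GaloisConnection F t) (m : ℤ) : coding F (t m) = 1 := by
  simp [coding, hF.apply_upperAdjoint h0 h1 ht m]

-- The blocks are cut `a - 1` letters before each `1`, so that they all start with `0 ^ (a - 1) 1`.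
lemma IsMechanical.factor_coding_between (hF : IsMechanical α F) (h0 : 0 ≤ α) (h1 : α < 1)
    (ht : GaloisConnection F t) {a : ℕ} (ha : 1 ≤ a) {m : ℤ} (hprev : t (m - 1) + a ≤ t m)
    (hnext : t m + a ≤ t (m + 1)) :
    factor (coding F) (t m - a + 1) (t (m + 1) - a + 1) =
      List.replicate (a - 1) 0 ++ [1] ++ List.replicate (t (m + 1) - t m - a).toNat 0 := by
  have before : factor (coding F) (t m - a + 1) (t m) = List.replicate (a - 1) 0 := by
    rw [factor_eq_replicate fun n hn hn' => coding_eq_zero ht (m := m - 1) (by omega) ?_]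
    · congr; omega
    · rw [sub_add_cancel]; omega
  have after : factor (coding F) (t m + 1) (t (m + 1) - a + 1) =
      List.replicate (t (m + 1) - t m - a).toNat 0 := by
    rw [factor_eq_replicate fun n hn hn' => coding_eq_zero ht (m := m) (by omega) (by omega)]
    congr 2; omega
  rw [← before, ← after, ← hF.coding_upperAdjoint h0 h1 ht m, ← factor_self_add_one,
    factor_append, factor_append] <;> omega

end IsMechanical

lemma cfGauss_fract_inv (α : ℝ) (k : ℕ) : cfGauss (Int.fract α⁻¹) k = cfGauss α (k + 1) := by
  induction k with
  | zero => rfl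
  | succ k ih => rw [cfGauss, ih]; rfl

lemma cfCoeff_fract_inv (α : ℝ) {k : ℕ} (hk : 1 ≤ k) :
    cfCoeff (Int.fract α⁻¹) k = cfCoeff α (k + 1) := by
  rw [cfCoeff, cfGauss_fract_inv, Nat.sub_add_cancel hk, cfCoeff, Nat.add_sub_cancel]

lemma irrational_fract_inv {α : ℝ} (hα : Irrational α) : Irrational (Int.fract α⁻¹) :=
  hα.inv.sub_intCast _

lemma fract_inv_mem_Ioo {α : ℝ} (hα : Irrational α) : Int.fract α⁻¹ ∈ Set.Ioo (0 : ℝ) 1 :=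
  ⟨(Int.fract_nonneg _).lt_of_ne' (irrational_fract_inv hα).ne_zero, Int.fract_lt_one _⟩

lemma one_le_cfCoeff_one {α : ℝ} (hα : α ∈ Set.Ioo (0 : ℝ) 1) : 1 ≤ cfCoeff α 1 :=
  Nat.one_le_floor_iff _ |>.2 ((one_le_inv₀ hα.1).2 hα.2.le)

lemma one_le_cfCoeff {α : ℝ} (hirr : Irrational α) (hα : α ∈ Set.Ioo (0 : ℝ) 1) (k : ℕ) :
    1 ≤ cfCoeff α (k + 1) := by
  induction k generalizing α with
  | zero => exact one_le_cfCoeff_one hα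
  | succ k ih =>
    rw [← cfCoeff_fract_inv α k.succ_pos]
    exact ih (irrational_fract_inv hirr) (fract_inv_mem_Ioo hirr)

section StandardWords

variable {a b : ℕ → ℕ}

lemma sWord_add_three (a : ℕ → ℕ) (n : ℕ) :
    sWord a (n + 3) =
      (List.replicate (a (n + 2)) (sWord a (n + 2))).flatten ++ sWord a (n + 1) := by
  rw [sWord]

lemma sWord_ne_nil (a : ℕ → ℕ) (n : ℕ) : sWord a n ≠ [] := by
  induction n using sWord.induct with
  | case1 | case2 | case3 => simp [sWord]
  | case4 n _ ih => simp [sWord_add_three, ih]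

lemma sWord_prefix_sWord {n : ℕ} (ha : 1 ≤ a (n + 2)) : sWord a (n + 2) <+: sWord a (n + 3) := by
  rw [sWord_add_three, ← Nat.sub_add_cancel ha, List.replicate_succ, List.flatten_cons,
    List.append_assoc]
  exact List.prefix_append _ _

lemma sWord_append_suffix_sWord {n : ℕ} (ha : 1 ≤ a (n + 2)) :
    sWord a (n + 2) ++ sWord a (n + 1) <:+ sWord a (n + 3) := by
  rw [sWord_add_three, ← Nat.sub_add_cancel ha, List.replicate_succ', List.flatten_append,
    List.flatten_singleton, List.append_assoc]
  exact List.suffix_append _ _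

lemma sWord_append_append_suffix_sWord {n : ℕ} (ha : ∀ k, 1 ≤ a (k + 1)) :
    sWord a (n + 2) ++ sWord a (n + 1) ++ sWord a (n + 2) <:+ sWord a (n + 4) := by
  have hsuffix : sWord a (n + 2) ++ sWord a (n + 1) <:+ sWord a (n + 3) :=
    sWord_append_suffix_sWord (ha _)
  exact (List.suffix_append_self_iff.2 hsuffix).trans (sWord_append_suffix_sWord (ha _))

lemma append_flatten_replicate {β : Type*} (u : List β) (k : ℕ) :
    u ++ (List.replicate k u).flatten = (List.replicate k u).flatten ++ u := by
  rw [← List.flatten_cons, ← List.replicate_succ, List.replicate_succ', List.flatten_append,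
    List.flatten_singleton]

-- `s_{n-1} s_n` and `s_n s_{n-1}` differ only in their last two letters.
lemma dropLast_sWord_prefix (ha : ∀ k, 1 ≤ a (k + 1)) (n : ℕ) :
    (sWord a (n + 2)).dropLast <+: sWord a (n + 1) ++ sWord a (n + 2) := by
  cases n with
  | zero =>
    have happend : sWord a 1 ++ sWord a 2 = List.replicate (a 1 - 1 + 1) 0 ++ [1] := by
      simp [sWord, List.replicate_succ]
    rw [happend, List.replicate_succ', List.append_assoc, sWord, List.dropLast_concat]
    exact List.prefix_append _ _
  | succ n =>
    have hprefix : (sWord a (n + 1)).dropLast <+: sWord a (n + 2) := by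
      cases n with
      | zero => simp [sWord]
      | succ n => exact (List.dropLast_prefix _).trans (sWord_prefix_sWord (ha _))
    rw [sWord_add_three, List.dropLast_append_of_ne_nil (sWord_ne_nil a _), ← List.append_assoc,
      append_flatten_replicate, List.append_assoc, List.prefix_append_right_inj]
    exact hprefix.trans (List.prefix_append _ _)

/-- The substitution `0 ↦ s_{n+1}`, `1 ↦ s_{n+1} s_n`, with `standardBlock a n x` the image of the
letter `x`. For `n = 0` it turns the words of slope `[a₂, a₃, …]` into those of slope
`[a₁, a₂, …]`. -/
noncomputable def standardBlock (a : ℕ → ℕ) (n : ℕ) (x : ℝ) : List ℝ :=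
  sWord a (n + 2) ++ if x = 1 then sWord a (n + 1) else []

lemma standardBlock_zero (a : ℕ → ℕ) (x : ℝ) :
    standardBlock a 0 x =
      List.replicate (a 1 - 1) 0 ++ [1] ++ if x = 1 then [0] else [] :=
  rfl

lemma flatten_replicate_flatMap {β γ : Type*} (φ : β → List γ) (u : List β) (k : ℕ) :
    (List.replicate k u).flatten.flatMap φ = (List.replicate k (u.flatMap φ)).flatten := by
  simp [List.flatMap_def, List.map_flatten, List.flatten_flatten]

lemma sWord_flatMap_standardBlock (hab : ∀ k, 1 ≤ k → b k = a (k + 1)) (ha : 1 ≤ a 2) (n : ℕ) :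
    (sWord b (n + 1)).flatMap (standardBlock a 0) = sWord a (n + 2) := by
  induction n using Nat.twoStepInduction with
  | zero => simp [sWord, standardBlock]
  | one =>
    obtain ⟨c, hc⟩ := Nat.exists_eq_add_of_le' ha
    have hsWord : sWord b (1 + 1) = List.replicate (b 1 - 1) 0 ++ [1] := rfl
    rw [hsWord, hab 1 le_rfl, sWord_add_three, hc, List.flatMap_append, List.flatMap_replicate,
      List.flatMap_singleton, List.replicate_succ', List.flatten_append]
    simp [standardBlock]
  | more n ih ih' =>
    rw [sWord_add_three, List.flatMap_append, flatten_replicate_flatMap, ih, ih',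
      hab _ (by omega), sWord_add_three a (n + 1)]

lemma standardBlock_flatMap_standardBlock (hab : ∀ k, 1 ≤ k → b k = a (k + 1)) (ha : 1 ≤ a 2)
    (n : ℕ) (x : ℝ) :
    (standardBlock b n x).flatMap (standardBlock a 0) = standardBlock a (n + 1) x := by
  rw [standardBlock, List.flatMap_append, sWord_flatMap_standardBlock hab ha, standardBlock]
  split_ifs
  · rw [sWord_flatMap_standardBlock hab ha]
  · rw [List.flatMap_nil]

end StandardWords

lemma IsMechanical.factor_coding_eq_standardBlock {α : ℝ} {F t : ℤ → ℤ} (hF : IsMechanical α F)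
    (h0 : 0 ≤ α) (h1 : α < 1) (ht : GaloisConnection F t) {a : ℕ → ℕ} (ha : 1 ≤ a 1)
    (gap : ∀ m, t (m + 1) = t m + a 1 ∨ t (m + 1) = t m + a 1 + 1) (m : ℤ) :
    factor (coding F) (t m - a 1 + 1) (t (m + 1) - a 1 + 1) =
      standardBlock a 0 (coding (fun m => t m - m * a 1) m) := by
  have hprev := gap (m - 1)
  have hnext := gap m
  rw [sub_add_cancel] at hprev
  rw [hF.factor_coding_between h0 h1 ht ha (by omega) (by omega), standardBlock_zero]
  rcases hnext with h | h
  · have hx : coding (fun m => t m - m * a 1) m = 0 := by simp only [coding, h]; push_cast; ring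
    have hlen : t (m + 1) - t m - a 1 = 0 := by omega
    simp [hx, hlen]
  · have hx : coding (fun m => t m - m * a 1) m = 1 := by simp only [coding, h]; push_cast; ring
    have hlen : t (m + 1) - t m - a 1 = 1 := by omega
    simp [hx, hlen]

lemma IsMechanical.exists_desubstitution {α : ℝ} {F : ℤ → ℤ} (hF : IsMechanical α F)
    (hα : α ∈ Set.Ioo (0 : ℝ) 1) :
    ∃ G, IsMechanical (Int.fract α⁻¹) G ∧ ∀ k l, ∃ i j,
      factor (coding F) k l <:+:
        (factor (coding G) i j).flatMap (standardBlock (cfCoeff α) 0) := by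
  obtain ⟨h0, h1⟩ := hα
  obtain ⟨t, ht⟩ := hF.exists_galoisConnection h0 h1
  set a := cfCoeff α
  have ha : 1 ≤ a 1 := one_le_cfCoeff_one ⟨h0, h1⟩
  have hfloor : (a 1 : ℤ) = ⌊α⁻¹⌋ := Int.natCast_floor_eq_floor (inv_nonneg.2 h0.le)
  have hG : IsMechanical (Int.fract α⁻¹) fun m => t m - m * a 1 := by
    rw [hfloor]
    exact (hF.upperAdjoint h0 h1 ht).sub_mul _
  have gap (m : ℤ) : t (m + 1) = t m + a 1 ∨ t (m + 1) = t m + a 1 + 1 := by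
    have := hG.apply_add_one (Int.fract_nonneg _) (Int.fract_lt_one _) m
    grind
  have hmono : Monotone fun m => t m - a 1 + 1 := fun i j hij => by
    simpa using ht.monotone_u hij
  refine ⟨_, hG, fun k l => ⟨F (k + a 1) - 1, F (l + a 1), ?_⟩⟩
  rw [← factor_eq_flatMap_factor hmono
    (hF.factor_coding_eq_standardBlock h0.le h1 ht ha gap)]
  have hk : ¬k + a 1 ≤ t (F (k + a 1) - 1) := (ht _ _).not.1 (by omega)
  have hl : l + a 1 ≤ t (F (l + a 1)) := ht.le_u_l _
  exact factor_infix_factor (by omega) (by omega)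

lemma IsMechanical.exists_factor_infix_flatMap {α : ℝ} {F : ℤ → ℤ}
    (hF : IsMechanical α F) (hirr : Irrational α) (hα : α ∈ Set.Ioo (0 : ℝ) 1) (n : ℕ) (k l : ℤ) :
    ∃ u : List ℝ, factor (coding F) k l <:+: u.flatMap (standardBlock (cfCoeff α) n) := by
  induction n generalizing α F k l with
  | zero =>
    obtain ⟨G, -, hdesubst⟩ := hF.exists_desubstitution hα
    obtain ⟨i, j, hinfix⟩ := hdesubst k l
    exact ⟨_, hinfix⟩
  | succ n ih =>
    obtain ⟨G, hG, hdesubst⟩ := hF.exists_desubstitution hα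
    obtain ⟨i, j, hinfix⟩ := hdesubst k l
    obtain ⟨u, hu⟩ := ih hG (irrational_fract_inv hirr) (fract_inv_mem_Ioo hirr) i j
    refine ⟨u, hinfix.trans ?_⟩
    have hflatMap := hu.flatMap (standardBlock (cfCoeff α) 0)
    simpa only [List.flatMap_assoc, standardBlock_flatMap_standardBlock
      (fun _ => cfCoeff_fract_inv α) (one_le_cfCoeff hirr hα 1)] using hflatMap

lemma infix_or_exists_infix_append_of_infix_flatMap {β γ : Type*} {φ : β → List γ} {s w : List γ}
    (hφ : ∀ x, s <+: φ x) (hlen : w.length ≤ s.length) {u : List β} (hw : w <:+: u.flatMap φ) :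
    w <:+: s ∨ ∃ x, w <:+: φ x ++ s := by
  induction u with
  | nil => exact .inl (hw.trans List.nil_infix)
  | cons x u ih =>
    rw [List.flatMap_cons, List.infix_append_iff] at hw
    rcases hw with hw | hw | ⟨w₁, w₂, rfl, hw₁, hw₂⟩
    · exact .inr ⟨x, hw.trans List.infix_append_left⟩
    · exact ih hw
    · have hs : s <+: u.flatMap φ ++ s := by
        cases u with
        | nil => simp
        | cons y u =>
          rw [List.flatMap_cons, List.append_assoc]
          exact (hφ y).trans (List.prefix_append _ _)
      have hw₂s : w₂ <+: s :=
        List.prefix_of_prefix_length_le (hw₂.trans (List.prefix_append _ _)) hs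
          (by rw [List.length_append] at hlen; omega)
      exact .inr ⟨x, List.infix_append_iff.2 (.inr (.inr ⟨w₁, w₂, rfl, hw₁, hw₂s⟩))⟩

lemma infix_append_dropLast_of_infix_append_self {β : Type*} {s w : List β}
    (hlen : w.length < s.length) (hw : w <:+: s ++ s) : w <:+: s ++ s.dropLast := by
  rw [List.infix_append_iff] at hw
  rcases hw with hw | hw | ⟨w₁, w₂, rfl, hw₁, hw₂⟩
  · exact hw.trans List.infix_append_left
  · exact hw.trans List.infix_append_left
  · have hw₂' : w₂ <+: s.dropLast :=
      List.prefix_of_prefix_length_le hw₂ (List.dropLast_prefix s)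
        (by rw [List.length_append] at hlen; rw [List.length_dropLast]; omega)
    exact List.infix_append_iff.2 (.inr (.inr ⟨w₁, w₂, rfl, hw₁, hw₂'⟩))

lemma infix_sWord_of_infix_flatMap_standardBlock {a : ℕ → ℕ} (ha : ∀ k, 1 ≤ a (k + 1)) {n : ℕ}
    {u w : List ℝ} (hlen : w.length < (sWord a (n + 2)).length)
    (hw : w <:+: u.flatMap (standardBlock a n)) : w <:+: sWord a (n + 4) := by
  refine List.IsInfix.trans ?_ (sWord_append_append_suffix_sWord ha).isInfix
  have hprefix (x : ℝ) : sWord a (n + 2) <+: standardBlock a n x := List.prefix_append _ _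
  rcases infix_or_exists_infix_append_of_infix_flatMap hprefix hlen.le hw with hw | ⟨x, hw⟩
  · exact hw.trans List.infix_append_right
  by_cases hx : x = 1
  · rwa [standardBlock, if_pos hx] at hw
  · rw [standardBlock, if_neg hx, List.append_nil] at hw
    rw [List.append_assoc]
    exact (infix_append_dropLast_of_infix_append_self hlen hw).trans
      ((List.prefix_append_right_inj _).2 (dropLast_sWord_prefix ha n)).isInfix

theorem short_word_is_subword_general
    (α : ℝ) (hirr : Irrational α) (hα : α ∈ Set.Ioo (0 : ℝ) 1)
    (w : List ℝ) (hw : w ∈ Walpha α) (n : ℕ)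
    (hlen : w.length < (sWord (cfCoeff α) (n + 1)).length) :
    w <:+: sWord (cfCoeff α) (n + 3) := by
  cases n with
  | zero =>
    obtain rfl : w = [] := List.length_eq_zero_iff.1 (Nat.lt_one_iff.1 hlen)
    exact List.nil_infix
  | succ n =>
    obtain ⟨θ, -, hw⟩ := hw
    obtain ⟨k, l, rfl⟩ := exists_eq_factor_of_mem_subZ hw
    rw [sturmian_eq_coding_floor hα.1.le hα.2] at hlen ⊢
    obtain ⟨u, hu⟩ := (isMechanical_floor α θ).exists_factor_infix_flatMap hirr hα n k l
    exact infix_sWord_of_infix_flatMap_standardBlock (one_le_cfCoeff hirr hα) hlen hu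

theorem short_word_is_subword
    (α : ℝ) (hirr : Irrational α) (hα : α ∈ Set.Ioo (0 : ℝ) 1)
    (w : List ℝ) (hw : w ∈ Walpha α) (n : ℕ) (hn : 2 ≤ n)
    (hlen : w.length < (sWord (cfCoeff α) (n + 1)).length) :
    w <:+: sWord (cfCoeff α) (n + 3) :=
  short_word_is_subword_general α hirr hα w hw n hlen
end

section
/- Let n ≥ 1 and let w be a subword of s_n. Then there exist words x, y over {0,1} with x w y = s_{n+3} and |x| ≥ |s_{n+1}| and |y| ≥ |s_{n+1}|. -/
open scoped Classical

theorem irrational_cfGauss {α : ℝ} (hα : Irrational α) : ∀ n, Irrational (cfGauss α n)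
  | 0 => hα
  | n + 1 => (irrational_cfGauss hα n).inv.sub_intCast _

theorem cfGauss_succ_mem_Ioo {α : ℝ} (hα : Irrational α) (n : ℕ) :
    cfGauss α (n + 1) ∈ Set.Ioo (0 : ℝ) 1 :=
  ⟨(Int.fract_nonneg _).lt_of_ne' (irrational_cfGauss hα (n + 1)).ne_zero, Int.fract_lt_one _⟩

theorem cfCoeff_add_two_pos {α : ℝ} (hα : Irrational α) (n : ℕ) : 0 < cfCoeff α (n + 2) := by
  obtain ⟨hpos, hlt⟩ := cfGauss_succ_mem_Ioo hα n
  exact Nat.floor_pos.2 ((one_le_inv₀ hpos).2 hlt.le)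

section sWord

variable {a : ℕ → ℕ} {n : ℕ}

theorem sWord_append_sWord_suffix (h : 0 < a (n + 2)) :
    sWord a (n + 2) ++ sWord a (n + 1) <:+ sWord a (n + 3) := by
  obtain ⟨k, hk⟩ := Nat.exists_eq_add_one.2 h
  exact ⟨(List.replicate k (sWord a (n + 2))).flatten, by simp [sWord, hk, List.replicate_succ']⟩

theorem sWord_append_sWord_append_sWord_suffix (h₂ : 0 < a (n + 2)) (h₃ : 0 < a (n + 3)) :
    sWord a (n + 2) ++ sWord a (n + 1) ++ sWord a (n + 2) <:+ sWord a (n + 4) :=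
  (List.suffix_append_self_iff.2 (sWord_append_sWord_suffix h₂)).trans
    (sWord_append_sWord_suffix h₃)

theorem subword_extends_with_margins_general {w : List ℝ} (h₂ : 0 < a (n + 2))
    (h₃ : 0 < a (n + 3)) (hw : w <:+: sWord a (n + 1)) :
    ∃ x y : List ℝ, x ++ w ++ y = sWord a (n + 4) ∧
      (sWord a (n + 2)).length ≤ x.length ∧ (sWord a (n + 2)).length ≤ y.length := by
  obtain ⟨u, v, huv⟩ := hw
  obtain ⟨t, ht⟩ := sWord_append_sWord_append_sWord_suffix h₂ h₃
  refine ⟨t ++ sWord a (n + 2) ++ u, v ++ sWord a (n + 2), ?_, ?_, ?_⟩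
  · simp only [← ht, ← huv, List.append_assoc]
  · simp only [List.length_append]
    lia
  · simp only [List.length_append]
    lia

end sWord

theorem subword_extends_with_margins
    (α : ℝ) (hirr : Irrational α) (hα : α ∈ Set.Ioo (0 : ℝ) 1)
    (n : ℕ) (hn : 1 ≤ n) (w : List ℝ) (hw : w <:+: sWord (cfCoeff α) (n + 1)) :
    ∃ x y : List ℝ, x ++ w ++ y = sWord (cfCoeff α) (n + 4) ∧
      (sWord (cfCoeff α) (n + 2)).length ≤ x.length ∧
      (sWord (cfCoeff α) (n + 2)).length ≤ y.length :=
  subword_extends_with_margins_general (cfCoeff_add_two_pos hirr n)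
    (cfCoeff_add_two_pos hirr (n + 1)) hw
end
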